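/- Let G be a finite connected strongly symmetric simple graph on n vertices with E ≠ ∅, adjacency matrix Adj and common vertex degree d, and let c = 2/√3. Let L : ℝ → Matrix (Fin n) (Fin n) ℝ be a family of symmetric matrices, differentiable at ε = 0, such that: (1) every row of L(ε) sums to zero for all ε; (2) L(0) = c·(d·I − Adj); (3) for all ε, L(ε)_ij = 0 whenever i ≠ j and (i,j) ∉ E, and L(ε)_ij < 0 whenever (i,j) ∈ E and ε is in a neighborhood of 0; and (4) tr(L'(0)) = 0. Let J denote the n×n all-ones matrix. Then the function ε ↦ det(L(ε) + n⁻¹·J), which for ε near 0 equals the product of the nonzero eigenvalues of L(ε), has derivative zero at ε = 0. -/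

import Mathlib

open Matrix

/-- `alphaNum G s i j` is the number of neighbors `k` of `i` with `dist k j = s`. -/
noncomputable def alphaNum {V : Type*} (G : SimpleGraph V) (s : ℕ) (i j : V) : ℕ :=
  Set.ncard {k : V | G.Adj i k ∧ G.dist k j = s}

/-- A graph is strongly symmetric if `alphaNum G s i j` depends only on `s` and `dist i j`. -/
def StronglySymmetric {V : Type*} (G : SimpleGraph V) : Prop :=
  ∀ (s : ℕ) (i j v w : V), G.dist i j = G.dist v w → alphaNum G s i j = alphaNum G s v w

/-- Derivative of the determinant, Jacobi formula. -/
theorem hasDerivAt_det_aux {n : ℕ} (M : ℝ → Matrix (Fin n) (Fin n) ℝ)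
    (M' : Matrix (Fin n) (Fin n) ℝ) (x : ℝ)
    (h : ∀ i j, HasDerivAt (fun ε => M ε i j) (M' i j) x) :
    HasDerivAt (fun ε => (M ε).det) ((M x).adjugate * M').trace x := by
  have h1 : HasDerivAt (fun ε => ∑ σ : Equiv.Perm (Fin n),
      ((Equiv.Perm.sign σ : ℤ) : ℝ) * ∏ i, M ε (σ i) i)
      (∑ σ : Equiv.Perm (Fin n), ((Equiv.Perm.sign σ : ℤ) : ℝ) *
        ∑ i, (∏ j ∈ Finset.univ.erase i, M x (σ j) j) • M' (σ i) i) x := by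
    apply HasDerivAt.fun_sum
    intro σ _
    apply HasDerivAt.const_mul
    apply HasDerivAt.fun_finsetProd
    intro i _
    exact h (σ i) i
  have h2 : (fun ε => (M ε).det) = (fun ε => ∑ σ : Equiv.Perm (Fin n),
      ((Equiv.Perm.sign σ : ℤ) : ℝ) * ∏ i, M ε (σ i) i) := by
    funext ε
    exact Matrix.det_apply' _
  rw [h2]
  convert h1 using 1
  have h3 : ∀ i, ((M x).adjugate * M') i i = ((M x).updateCol i (fun k => M' k i)).det := by
    intro i
    rw [← Matrix.cramer_apply, Matrix.cramer_eq_adjugate_mulVec]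
    rfl
  simp only [Matrix.trace, Matrix.diag, h3, Matrix.det_apply', Finset.mul_sum]
  rw [Finset.sum_comm]
  refine Finset.sum_congr rfl fun σ _ => Finset.sum_congr rfl fun i _ => ?_
  rw [← Finset.prod_erase_mul _ _ (Finset.mem_univ i)]
  congr 1
  rw [Matrix.updateCol_self, smul_eq_mul]
  congr 1
  refine Finset.prod_congr rfl fun j hj => ?_
  rw [Matrix.updateCol_ne (Finset.ne_of_mem_erase hj)]

/-- Matrices whose entries depend only on the distance, with constant column sums. -/
def distSub {n : ℕ} (G : SimpleGraph (Fin n)) : Submodule ℝ (Matrix (Fin n) (Fin n) ℝ) where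
  carrier := {B | (∀ i j v w, G.dist i j = G.dist v w → B i j = B v w) ∧
    ∃ β : ℝ, ∀ j, ∑ i, B i j = β}
  add_mem' := by
    rintro A B ⟨hA, a, ha⟩ ⟨hB, b, hb⟩
    refine ⟨fun i j v w h => ?_, a + b, fun j => ?_⟩
    · simp [hA i j v w h, hB i j v w h]
    · simp [Finset.sum_add_distrib, ha, hb]
  zero_mem' := ⟨fun _ _ _ _ _ => rfl, 0, fun j => by simp⟩
  smul_mem' := by
    rintro c A ⟨hA, a, ha⟩
    refine ⟨fun i j v w h => ?_, c * a, fun j => ?_⟩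
    · simp [hA i j v w h]
    · simp [← Finset.mul_sum, ha]

theorem one_mem_distSub {n : ℕ} (G : SimpleGraph (Fin n)) (hconn : G.Connected) :
    1 ∈ distSub G := by
  refine ⟨fun i j v w h => ?_, 1, fun j => ?_⟩
  · have : i = j ↔ v = w := by
      rw [← hconn.dist_eq_zero_iff, ← hconn.dist_eq_zero_iff (u := v), h]
    simp [Matrix.one_apply, this]
  · simp [Matrix.one_apply]

theorem adj_mul_mem_distSub {n : ℕ} (G : SimpleGraph (Fin n)) [DecidableRel G.Adj]
    (hsym : StronglySymmetric G) (d : ℕ) (hd : ∀ i : Fin n, G.degree i = d)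
    (B : Matrix (Fin n) (Fin n) ℝ) (hB : B ∈ distSub G) :
    G.adjMatrix ℝ * B ∈ distSub G := by
  obtain ⟨hB, β, hβ⟩ := hB
  refine ⟨fun i j v w h => ?_, d * β, fun j => ?_⟩
  · classical
    obtain ⟨f, hf⟩ : ∃ f : ℕ → ℝ, ∀ i j, B i j = f (G.dist i j) := by
      refine ⟨fun s => if h : ∃ p : Fin n × Fin n, G.dist p.1 p.2 = s then
        B h.choose.1 h.choose.2 else 0, fun i j => ?_⟩
      have hex : ∃ p : Fin n × Fin n, G.dist p.1 p.2 = G.dist i j := ⟨(i, j), rfl⟩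
      simp only [dif_pos hex]
      exact (hB _ _ _ _ hex.choose_spec).symm
    have key : ((G.neighborFinset i).val.map fun k => G.dist k j) =
        ((G.neighborFinset v).val.map fun k => G.dist k w) := by
      ext s
      have aux : ∀ i j, Multiset.count s ((G.neighborFinset i).val.map fun k => G.dist k j)
          = alphaNum G s i j := by
        intro i j
        rw [Multiset.count_map, alphaNum]
        have : {k | G.Adj i k ∧ G.dist k j = s} =
            (((G.neighborFinset i).filter fun k => s = G.dist k j : Finset (Fin n)) :
              Set (Fin n)) := by
          ext k
          simp [eq_comm]
        rw [this, Set.ncard_coe_finset]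
        rfl
      rw [aux, aux, hsym s i j v w h]
    have key2 := congrArg (fun m => (m.map f).sum) key
    simp only [Multiset.map_map] at key2
    rw [SimpleGraph.adjMatrix_mul_apply, SimpleGraph.adjMatrix_mul_apply]
    simp only [hf]
    exact key2
  · simp only [SimpleGraph.adjMatrix_mul_apply]
    have : ∀ i, ∑ k ∈ G.neighborFinset i, B k j = ∑ k, if G.Adj i k then B k j else 0 := by
      intro i
      rw [← Finset.sum_filter]
      refine Finset.sum_congr ?_ fun _ _ => rfl
      ext k
      simp
    simp only [this]
    rw [Finset.sum_comm, ← hβ j, Finset.mul_sum]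
    refine Finset.sum_congr rfl fun k _ => ?_
    rw [← Finset.sum_filter, Finset.sum_const, nsmul_eq_mul, ← hd k]
    congr 2
    rw [← SimpleGraph.card_neighborFinset_eq_degree]
    congr 1
    ext i
    simp [G.adj_comm]

theorem ones_mul_mem_distSub {n : ℕ} (G : SimpleGraph (Fin n))
    (B : Matrix (Fin n) (Fin n) ℝ) (hB : B ∈ distSub G) :
    (Matrix.of fun _ _ => (1 : ℝ)) * B ∈ distSub G := by
  obtain ⟨hB, β, hβ⟩ := hB
  refine ⟨fun i j v w h => ?_, n * β, fun j => ?_⟩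
  · simp [Matrix.mul_apply, hβ]
  · simp [Matrix.mul_apply, hβ]

theorem det_ne_zero_aux {n : ℕ} (G : SimpleGraph (Fin n)) [DecidableRel G.Adj]
    (hconn : G.Connected) (d : ℕ) (hd : ∀ i : Fin n, G.degree i = d) (c : ℝ) (hc : c ≠ 0) :
    (c • ((d : ℝ) • (1 : Matrix (Fin n) (Fin n) ℝ) - G.adjMatrix ℝ)
      + ((n : ℝ))⁻¹ • (Matrix.of fun _ _ => (1 : ℝ))).det ≠ 0 := by
  intro h0
  obtain ⟨x, hx0, hx⟩ := Matrix.exists_mulVec_eq_zero_iff.mpr h0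
  apply hx0
  have hn : (n : ℝ) ≠ 0 := by
    obtain ⟨i⟩ := hconn.nonempty
    have : n ≠ 0 := by
      rintro rfl
      exact i.elim0
    exact_mod_cast this
  have hlap : (d : ℝ) • (1 : Matrix (Fin n) (Fin n) ℝ) - G.adjMatrix ℝ = G.lapMatrix ℝ := by
    rw [SimpleGraph.lapMatrix, SimpleGraph.degMatrix]
    congr 1
    ext i j
    simp [Matrix.diagonal_apply, Matrix.one_apply, hd]
  rw [hlap] at hx
  have hx' : ∀ i, c * (G.lapMatrix ℝ *ᵥ x) i + (n : ℝ)⁻¹ * ∑ j, x j = 0 := by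
    intro i
    have := congrFun hx i
    rw [Matrix.add_mulVec, Matrix.smul_mulVec, Matrix.smul_mulVec] at this
    simpa [Matrix.mulVec, dotProduct] using this
  have hz : ∑ i, (G.lapMatrix ℝ *ᵥ x) i = 0 := by
    have h1 : (fun _ => (1 : ℝ)) ⬝ᵥ (G.lapMatrix ℝ *ᵥ x) = 0 := by
      rw [Matrix.dotProduct_mulVec, ← Matrix.mulVec_transpose, (G.isSymm_lapMatrix (R := ℝ)).eq]
      have := G.lapMatrix_mulVec_const_eq_zero (R := ℝ)
      rw [this, zero_dotProduct]
    simpa [dotProduct] using h1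
  have hs : ∑ j, x j = 0 := by
    have := Finset.sum_congr (rfl : (Finset.univ : Finset (Fin n)) = Finset.univ)
      fun i _ => hx' i
    rw [Finset.sum_add_distrib, ← Finset.mul_sum, hz] at this
    simpa [hn] using this
  have hl : G.lapMatrix ℝ *ᵥ x = 0 := by
    funext i
    have := hx' i
    rw [hs] at this
    simpa [hc] using this
  rw [SimpleGraph.lapMatrix_mulVec_eq_zero_iff_forall_reachable] at hl
  funext i
  have h2 : ∑ j, x j = n * x i := by
    rw [Finset.sum_congr rfl fun j _ => hl j i (hconn.preconnected j i)]
    simp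
  rw [hs] at h2
  simpa [hn] using h2.symm

theorem adjugate_mem_distSub {n : ℕ} (G : SimpleGraph (Fin n)) (M : Matrix (Fin n) (Fin n) ℝ)
    (h1 : 1 ∈ distSub G) (hM : ∀ B ∈ distSub G, M * B ∈ distSub G) (hdet : M.det ≠ 0) :
    M.adjugate ∈ distSub G := by
  have hu : IsUnit M.det := hdet.isUnit
  let T : distSub G →ₗ[ℝ] distSub G := (LinearMap.mulLeft ℝ M).restrict hM
  have hinj : Function.Injective T := by
    intro A B hAB
    have h : M * A.1 = M * B.1 := congrArg Subtype.val hAB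
    apply Subtype.ext
    have := congrArg (fun X => M⁻¹ * X) h
    simpa [← Matrix.mul_assoc, Matrix.nonsing_inv_mul M hu] using this
  obtain ⟨B, hB⟩ := (LinearMap.injective_iff_surjective.mp hinj) ⟨1, h1⟩
  have hB' : M * B.1 = 1 := congrArg Subtype.val hB
  have : M.adjugate = M.det • B.1 := by
    calc M.adjugate = M.adjugate * (M * B.1) := by rw [hB', mul_one]
      _ = M.det • B.1 := by rw [← Matrix.mul_assoc, Matrix.adjugate_mul]; simp
  rw [this]
  exact (distSub G).smul_mem _ B.2

/-- Let `G` be a finite connected strongly symmetric graph on `n` vertices with adjacency matrix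
`Adj` and common degree `d`, and let `L(ε)` be a family of symmetric matrices, differentiable at
`ε = 0`, whose rows sum to zero, with `L(0) = (2/√3)·(d·I - Adj)` the cotan-Laplacian of the
equilateral triangulation on `G`, supported on the edges off the diagonal, with negative entries
on the edges near `ε = 0` and with `tr L'(0) = 0`. Then `ε ↦ det(L(ε) + n⁻¹ J)`, which near `0`
equals the product of the nonzero eigenvalues of `L(ε)`, has derivative zero at `ε = 0`. -/
theorem deriv_det_modified_laplacian_symmetric
    (n : ℕ) (G : SimpleGraph (Fin n)) [DecidableRel G.Adj]
    (hconn : G.Connected) (hE : ∃ a b : Fin n, G.Adj a b)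
    (hsym : StronglySymmetric G)
    (d : ℕ) (hd : ∀ i : Fin n, G.degree i = d)
    (L : ℝ → Matrix (Fin n) (Fin n) ℝ)
    (hsymm : ∀ ε : ℝ, (L ε).IsSymm)
    (hdiff : ∀ i j : Fin n, DifferentiableAt ℝ (fun ε => L ε i j) 0)
    (hrow : ∀ (ε : ℝ) (i : Fin n), ∑ j : Fin n, L ε i j = 0)
    (hL0 : L 0 = (2 / Real.sqrt 3) •
      ((d : ℝ) • (1 : Matrix (Fin n) (Fin n) ℝ) - G.adjMatrix ℝ))
    (hsupp : ∀ (ε : ℝ) (i j : Fin n), i ≠ j → ¬ G.Adj i j → L ε i j = 0)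
    (hneg : ∀ᶠ ε in nhds (0 : ℝ), ∀ i j : Fin n, G.Adj i j → L ε i j < 0)
    (htr : Matrix.trace (Matrix.of fun i j => deriv (fun ε => L ε i j) 0) = 0) :
    HasDerivAt
      (fun ε => Matrix.det
        (L ε + ((n : ℝ))⁻¹ • (Matrix.of fun _ _ => (1 : ℝ))))
      0 0 := by
  set M' : Matrix (Fin n) (Fin n) ℝ := Matrix.of fun i j => deriv (fun ε => L ε i j) 0 with hM'
  have hder : ∀ i j, HasDerivAt (fun ε => L ε i j) (M' i j) 0 := fun i j =>
    (hdiff i j).hasDerivAt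
  have hdet := hasDerivAt_det_aux
    (fun ε => L ε + ((n : ℝ))⁻¹ • (Matrix.of fun _ _ => (1 : ℝ))) M' 0
    (fun i j => by simpa using (hder i j).add_const ((n : ℝ)⁻¹))
  convert hdet using 1
  have hc : (2 / Real.sqrt 3) ≠ 0 := by positivity
  have hmem : (L 0 + ((n : ℝ))⁻¹ • (Matrix.of fun _ _ => (1 : ℝ))).adjugate ∈ distSub G := by
    apply adjugate_mem_distSub G _ (one_mem_distSub G hconn)
    · intro B hB
      rw [hL0, Matrix.add_mul, Matrix.smul_mul, Matrix.sub_mul, Matrix.smul_mul, Matrix.smul_mul,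
        Matrix.one_mul]
      exact (distSub G).add_mem ((distSub G).smul_mem _ ((distSub G).sub_mem
        ((distSub G).smul_mem _ hB) (adj_mul_mem_distSub G hsym d hd B hB)))
        ((distSub G).smul_mem _ (ones_mul_mem_distSub G B hB))
    · rw [hL0]
      exact det_ne_zero_aux G hconn d hd _ hc
  have hmem1 := hmem.1
  generalize (L 0 + ((n : ℝ))⁻¹ • (Matrix.of fun _ _ => (1 : ℝ))).adjugate = A at hmem1 ⊢
  obtain ⟨a, b, hab⟩ := hE
  have hrow' : ∀ i, ∑ j, M' i j = 0 := by
    intro i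
    have h1 : HasDerivAt (fun ε => ∑ j, L ε i j) (∑ j, M' i j) 0 :=
      HasDerivAt.fun_sum fun j _ => hder i j
    simp only [hrow] at h1
    exact h1.unique (hasDerivAt_const _ _)
  have hsupp' : ∀ i j, i ≠ j → ¬ G.Adj i j → M' i j = 0 := by
    intro i j hij hadj
    have h1 := hder i j
    simp only [hsupp _ i j hij hadj] at h1
    exact h1.unique (hasDerivAt_const _ _)
  have hterm : ∀ i k, A i k * M' k i =
      A a b * M' k i + if k = i then (A a a - A a b) * M' i i else 0 := by
    intro i k
    by_cases hik : k = i
    · subst hik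
      rw [if_pos rfl, hmem1 k k a a (by simp)]
      ring
    · rw [if_neg hik, add_zero]
      by_cases hadj : G.Adj k i
      · rw [hmem1 i k a b]
        rw [SimpleGraph.dist_eq_one_iff_adj.mpr hab, SimpleGraph.dist_eq_one_iff_adj.mpr hadj.symm]
      · rw [hsupp' k i hik hadj]
        simp
  have htr' : ∑ i, M' i i = 0 := htr
  symm
  calc (A * M').trace = ∑ i, ∑ k, A i k * M' k i := rfl
    _ = A a b * (∑ k, ∑ i, M' k i) + (A a a - A a b) * ∑ i, M' i i := by
      simp only [hterm, Finset.sum_add_distrib, Finset.sum_ite_eq', Finset.sum_ite_eq,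
        Finset.mem_univ, if_true, ← Finset.mul_sum]
      rw [Finset.sum_comm]
    _ = 0 := by simp [hrow', htr']
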